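/- Let n ≥ 1, 1 ≤ p < ∞, and 0 < α < n. If f ∈ S_{p,α}(ℝ^n) and there exist c > 0 and σ > 0 such that η_{p,α}f(r) ≤ c r^{σ/p} for every r > 0, then f belongs to the weak Morrey space wL^{p, n − α + σ}(ℝ^n). -/

import Mathlib

/-!
Since `α ≤ n`, the kernel `|x - y|^{-(n-α)}` is at least `r^{-(n-α)}` on `B(x, r)`, so the quantity
`r^{-(n-α)} ∫_{B(x,r)} |f|^p` is dominated by `(η_{p,α} f(r))^p`. A modulus of size `c r^{σ/p}`
therefore bounds the strong Morrey norm of exponent `n - α + σ` by `c`, and Chebyshev's inequality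
on each ball bounds the weak Morrey norm by the strong one.
-/

open MeasureTheory Metric Filter Set ENNReal

noncomputable section

/-- Euclidean space ℝ^n. -/
abbrev Euc (n : ℕ) := EuclideanSpace ℝ (Fin n)

/-- Stummel p-modulus with general weight Ψ:
`η_{p,Ψ}f(r) = sup_x ( ∫_{|x-y|<r} |f(y)|^p Ψ(|x-y|)/|x-y|^n dy )^{1/p}`. -/
noncomputable def stummelMod (n : ℕ) (p : ℝ) (Ψ : ℝ → ℝ) (f : Euc n → ℝ) (r : ℝ) : ℝ≥0∞ :=
  ⨆ x : Euc n,
    (∫⁻ y in ball x r,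
        ENNReal.ofReal (|f y| ^ p * Ψ (dist x y) / dist x y ^ (n : ℝ))) ^ (1 / p)

/-- Stummel p-modulus with power weight Ψ(t) = t^α:
`η_{p,α}f(r) = sup_x ( ∫_{|x-y|<r} |f(y)|^p / |x-y|^{n-α} dy )^{1/p}`. -/
noncomputable def stummelModA (n : ℕ) (p α : ℝ) (f : Euc n → ℝ) (r : ℝ) : ℝ≥0∞ :=
  ⨆ x : Euc n,
    (∫⁻ y in ball x r,
        ENNReal.ofReal (|f y| ^ p / dist x y ^ ((n : ℝ) - α))) ^ (1 / p)

/-- f ∈ L^p_loc(ℝ^n). -/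
def MemLocLp (n : ℕ) (p : ℝ) (f : Euc n → ℝ) : Prop :=
  LocallyIntegrable (fun y => |f y| ^ p) volume

/-- The generalized Stummel p-class `S_{p,Ψ}`. -/
def MemStummel (n : ℕ) (p : ℝ) (Ψ : ℝ → ℝ) (f : Euc n → ℝ) : Prop :=
  MemLocLp n p f ∧ (∀ r > 0, stummelMod n p Ψ f r < ⊤) ∧
    Tendsto (stummelMod n p Ψ f) (nhdsWithin 0 (Ioi 0)) (nhds 0)

/-- The Stummel p-class `S_{p,α}` (power weight). -/
def MemStummelA (n : ℕ) (p α : ℝ) (f : Euc n → ℝ) : Prop :=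
  MemLocLp n p f ∧ (∀ r > 0, stummelModA n p α f r < ⊤) ∧
    Tendsto (stummelModA n p α f) (nhdsWithin 0 (Ioi 0)) (nhds 0)

/-- The bounded Stummel modulus class `S̃_{p,α}`. -/
def MemStummelBddA (n : ℕ) (p α : ℝ) (f : Euc n → ℝ) : Prop :=
  MemLocLp n p f ∧ ∀ r > 0, stummelModA n p α f r < ⊤

/-- Generalized Morrey norm `‖f‖_{L^{p,Ψ}}`. -/
noncomputable def morreyNorm (n : ℕ) (p : ℝ) (Ψ : ℝ → ℝ) (f : Euc n → ℝ) : ℝ≥0∞ :=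
  ⨆ (x : Euc n) (r : ℝ) (_ : 0 < r),
    (volume (ball x r))⁻¹ ^ (1 / p) * ENNReal.ofReal (Ψ r)⁻¹ *
      (∫⁻ y in ball x r, ENNReal.ofReal (|f y| ^ p)) ^ (1 / p)

/-- The generalized Morrey space `L^{p,Ψ}`. -/
def MemMorrey (n : ℕ) (p : ℝ) (Ψ : ℝ → ℝ) (f : Euc n → ℝ) : Prop :=
  MemLocLp n p f ∧ morreyNorm n p Ψ f < ⊤

/-- Classical Morrey norm `‖f‖_{L^{p,λ}}`. -/
noncomputable def morreyNormC (n : ℕ) (p lam : ℝ) (f : Euc n → ℝ) : ℝ≥0∞ :=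
  ⨆ (x : Euc n) (r : ℝ) (_ : 0 < r),
    ENNReal.ofReal (r ^ (-(lam / p))) *
      (∫⁻ y in ball x r, ENNReal.ofReal (|f y| ^ p)) ^ (1 / p)

/-- The classical Morrey space `L^{p,λ}`. -/
def MemMorreyC (n : ℕ) (p lam : ℝ) (f : Euc n → ℝ) : Prop :=
  MemLocLp n p f ∧ morreyNormC n p lam f < ⊤

/-- Generalized weak Morrey norm `‖f‖_{wL^{p,Ψ}}`. -/
noncomputable def weakMorreyNorm (n : ℕ) (p : ℝ) (Ψ : ℝ → ℝ) (f : Euc n → ℝ) : ℝ≥0∞ :=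
  ⨆ (x : Euc n) (r : ℝ) (_ : 0 < r) (t : ℝ) (_ : 0 < t),
    ENNReal.ofReal t * (volume {y ∈ ball x r | t < |f y|}) ^ (1 / p) /
      (ENNReal.ofReal (Ψ r) * (volume (ball x r)) ^ (1 / p))

/-- The generalized weak Morrey space `wL^{p,Ψ}`. -/
def MemWeakMorrey (n : ℕ) (p : ℝ) (Ψ : ℝ → ℝ) (f : Euc n → ℝ) : Prop :=
  Measurable f ∧ weakMorreyNorm n p Ψ f < ⊤

/-- Classical weak Morrey norm `‖f‖_{wL^{p,λ}}`. -/
noncomputable def weakMorreyNormC (n : ℕ) (p lam : ℝ) (f : Euc n → ℝ) : ℝ≥0∞ :=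
  ⨆ (x : Euc n) (r : ℝ) (_ : 0 < r) (t : ℝ) (_ : 0 < t),
    ENNReal.ofReal (r ^ (-(lam / p))) * ENNReal.ofReal t *
      (volume {y ∈ ball x r | t < |f y|}) ^ (1 / p)

/-- The classical weak Morrey space `wL^{p,λ}`. -/
def MemWeakMorreyC (n : ℕ) (p lam : ℝ) (f : Euc n → ℝ) : Prop :=
  Measurable f ∧ weakMorreyNormC n p lam f < ⊤

/-- Decreasing rearrangement `f*(t) = inf{σ > 0 : |{|f| > σ}| ≤ t}`. -/
noncomputable def rearrangement (n : ℕ) (f : Euc n → ℝ) (t : ℝ) : ℝ :=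
  sInf {σ : ℝ | 0 < σ ∧ volume {x : Euc n | σ < |f x|} ≤ ENNReal.ofReal t}

/-- Lorentz norm `‖f‖_{L^p_κ} = ( ∫₀^∞ (t^{1/κ} f*(t))^p dt/t )^{1/p}`. -/
noncomputable def lorentzNorm (n : ℕ) (kappa p : ℝ) (f : Euc n → ℝ) : ℝ≥0∞ :=
  (∫⁻ t in Ioi (0 : ℝ),
      ENNReal.ofReal ((t ^ (1 / kappa) * rearrangement n f t) ^ p / t)) ^ (1 / p)

/-- The Lorentz space `L^p_κ`. -/
def MemLorentz (n : ℕ) (kappa p : ℝ) (f : Euc n → ℝ) : Prop :=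
  Measurable f ∧ lorentzNorm n kappa p f < ⊤

end

section Measure

variable {X : Type*} [MeasurableSpace X] {μ : Measure X}

lemma ofReal_mul_measure_lt_abs_rpow_le {p t : ℝ} {f : X → ℝ} (hp : 0 < p) (ht : 0 ≤ t)
    (hf : AEMeasurable f μ) :
    ENNReal.ofReal t * μ {y | t < |f y|} ^ (1 / p) ≤
      (∫⁻ y, ENNReal.ofReal (|f y| ^ p) ∂μ) ^ (1 / p) := by
  have superlevel_subset :
      {y | t < |f y|} ⊆ {y | ENNReal.ofReal (t ^ p) ≤ ENNReal.ofReal (|f y| ^ p)} := fun y hy =>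
    ENNReal.ofReal_le_ofReal (Real.rpow_le_rpow ht (le_of_lt hy) hp.le)
  have chebyshev : ENNReal.ofReal (t ^ p) * μ {y | t < |f y|} ≤
      ∫⁻ y, ENNReal.ofReal (|f y| ^ p) ∂μ :=
    (mul_le_mul_right (measure_mono superlevel_subset) _).trans
      (mul_meas_ge_le_lintegral₀ (hf.abs.pow_const p).ennreal_ofReal _)
  have ofReal_rpow_root : ENNReal.ofReal (t ^ p) ^ (1 / p) = ENNReal.ofReal t := by
    rw [ENNReal.ofReal_rpow_of_nonneg (by positivity) (by positivity), one_div,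
      Real.rpow_rpow_inv ht hp.ne']
  calc ENNReal.ofReal t * μ {y | t < |f y|} ^ (1 / p)
      = (ENNReal.ofReal (t ^ p) * μ {y | t < |f y|}) ^ (1 / p) := by
        rw [ENNReal.mul_rpow_of_nonneg _ _ (by positivity), ofReal_rpow_root]
    _ ≤ (∫⁻ y, ENNReal.ofReal (|f y| ^ p) ∂μ) ^ (1 / p) :=
        ENNReal.rpow_le_rpow chebyshev (by positivity)

end Measure

lemma lintegral_ball_le_mul_lintegral_div_dist_rpow {X : Type*} [MetricSpace X]
    [MeasurableSpace X] [OpensMeasurableSpace X] {μ : Measure X} [NullSingletonClass μ] {γ : ℝ}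
    (hγ : 0 ≤ γ) (g : X → ℝ) (x : X) (r : ℝ) :
    ∫⁻ y in ball x r, ENNReal.ofReal (g y) ∂μ ≤
      ENNReal.ofReal (r ^ γ) * ∫⁻ y in ball x r, ENNReal.ofReal (g y / dist x y ^ γ) ∂μ := by
  rw [← lintegral_const_mul' _ _ ENNReal.ofReal_ne_top]
  refine setLIntegral_mono_ae' measurableSet_ball ?_
  -- The kernel has the junk value `g x / 0 = 0` at the centre, which is a null set.
  filter_upwards [μ.ae_ne x] with y hyx hy
  have dist_rpow_pos : 0 < dist x y ^ γ := Real.rpow_pos_of_pos (dist_pos.2 hyx.symm) γ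
  have dist_rpow_le : dist x y ^ γ ≤ r ^ γ :=
    Real.rpow_le_rpow dist_nonneg (mem_ball'.1 hy).le hγ
  calc ENNReal.ofReal (g y)
      = ENNReal.ofReal (dist x y ^ γ) * ENNReal.ofReal (g y / dist x y ^ γ) := by
        rw [← ENNReal.ofReal_mul dist_rpow_pos.le, mul_div_cancel₀ _ dist_rpow_pos.ne']
    _ ≤ ENNReal.ofReal (r ^ γ) * ENNReal.ofReal (g y / dist x y ^ γ) := by gcongr

section Morrey

variable {n : ℕ} {p α : ℝ} {f : Euc n → ℝ}

lemma weakMorreyNormC_le_morreyNormC (hp : 0 < p) (lam : ℝ) (hf : AEMeasurable f) :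
    weakMorreyNormC n p lam f ≤ morreyNormC n p lam f := by
  refine iSup_mono fun x => iSup_mono fun r => iSup_mono fun _ => iSup₂_le fun t ht => ?_
  have volume_superlevel : volume {y ∈ ball x r | t < |f y|} =
      volume.restrict (ball x r) {y | t < |f y|} := by
    rw [Measure.restrict_apply' measurableSet_ball, inter_comm]; rfl
  rw [volume_superlevel, mul_assoc]
  gcongr
  exact ofReal_mul_measure_lt_abs_rpow_le hp ht.le hf.restrict

variable [NeZero n]

lemma lintegral_ball_rpow_le_mul_stummelModA (hp : 0 < p) (hα : α ≤ n) (x : Euc n) {r : ℝ}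
    (hr : 0 ≤ r) :
    (∫⁻ y in ball x r, ENNReal.ofReal (|f y| ^ p)) ^ (1 / p) ≤
      ENNReal.ofReal (r ^ ((n - α) / p)) * stummelModA n p α f r := by
  calc (∫⁻ y in ball x r, ENNReal.ofReal (|f y| ^ p)) ^ (1 / p)
      ≤ (ENNReal.ofReal (r ^ (n - α)) *
          ∫⁻ y in ball x r, ENNReal.ofReal (|f y| ^ p / dist x y ^ (n - α))) ^ (1 / p) :=
        ENNReal.rpow_le_rpow
          (lintegral_ball_le_mul_lintegral_div_dist_rpow (sub_nonneg.2 hα) _ x r) (by positivity)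
    _ = ENNReal.ofReal (r ^ ((n - α) / p)) *
          (∫⁻ y in ball x r, ENNReal.ofReal (|f y| ^ p / dist x y ^ (n - α))) ^ (1 / p) := by
        rw [ENNReal.mul_rpow_of_nonneg _ _ (by positivity),
          ENNReal.ofReal_rpow_of_nonneg (by positivity) (by positivity), ← Real.rpow_mul hr,
          mul_one_div]
    _ ≤ ENNReal.ofReal (r ^ ((n - α) / p)) * stummelModA n p α f r := by
        gcongr
        exact le_iSup (fun z : Euc n =>
          (∫⁻ y in ball z r, ENNReal.ofReal (|f y| ^ p / dist z y ^ (n - α))) ^ (1 / p)) x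

lemma morreyNormC_le_of_stummelModA_le (hp : 0 < p) (hα : α ≤ n) {c : ℝ≥0∞} {σ : ℝ}
    (hbound : ∀ r > 0, stummelModA n p α f r ≤ c * ENNReal.ofReal (r ^ (σ / p))) :
    morreyNormC n p (n - α + σ) f ≤ c := by
  refine iSup_le fun x => iSup₂_le fun r hr => ?_
  have scaling_cancels :
      r ^ (-((n - α + σ) / p)) * (r ^ ((n - α) / p) * r ^ (σ / p)) = 1 := by
    rw [← Real.rpow_add hr, ← add_div, ← Real.rpow_add hr, neg_add_cancel, Real.rpow_zero]
  calc ENNReal.ofReal (r ^ (-((n - α + σ) / p))) *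
        (∫⁻ y in ball x r, ENNReal.ofReal (|f y| ^ p)) ^ (1 / p)
      ≤ ENNReal.ofReal (r ^ (-((n - α + σ) / p))) *
          (ENNReal.ofReal (r ^ ((n - α) / p)) * stummelModA n p α f r) := by
        gcongr
        exact lintegral_ball_rpow_le_mul_stummelModA hp hα x hr.le
    _ ≤ ENNReal.ofReal (r ^ (-((n - α + σ) / p))) *
          (ENNReal.ofReal (r ^ ((n - α) / p)) * (c * ENNReal.ofReal (r ^ (σ / p)))) := by
        gcongr
        exact hbound r hr
    _ = c * ENNReal.ofReal
          (r ^ (-((n - α + σ) / p)) * (r ^ ((n - α) / p) * r ^ (σ / p))) := by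
        rw [ENNReal.ofReal_mul (by positivity), ENNReal.ofReal_mul (by positivity)]
        ring
    _ = c := by rw [scaling_cancels, ENNReal.ofReal_one, mul_one]

theorem stummel_subset_weak_morrey_classical_general (hp : 0 < p) (hα : α ≤ n)
    (hf : Measurable f) {c : ℝ≥0∞} (hc : c ≠ ∞) {σ : ℝ}
    (hbound : ∀ r > 0, stummelModA n p α f r ≤ c * ENNReal.ofReal (r ^ (σ / p))) :
    MemWeakMorreyC n p (n - α + σ) f :=
  ⟨hf, calc weakMorreyNormC n p (n - α + σ) f
      ≤ morreyNormC n p (n - α + σ) f := weakMorreyNormC_le_morreyNormC hp _ hf.aemeasurable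
    _ ≤ c := morreyNormC_le_of_stummelModA_le hp hα hbound
    _ < ∞ := hc.lt_top⟩

end Morrey

/-- If `f ∈ S_{p,α}(ℝ^n)` and `η_{p,α}f(r) ≤ c r^{σ/p}` for every `r > 0`
with `c, σ > 0`, then `f ∈ wL^{p, n − α + σ}(ℝ^n)`. -/
theorem stummel_subset_weak_morrey_classical (n : ℕ) (hn : 1 ≤ n) (p α : ℝ)
    (hp : 1 ≤ p) (hα : 0 < α) (hαn : α < n)
    (f : Euc n → ℝ) (hmeas : Measurable f) (hf : MemStummelA n p α f)
    (c σ : ℝ) (hc : 0 < c) (hσ : 0 < σ)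
    (hbound : ∀ r > 0, stummelModA n p α f r ≤ ENNReal.ofReal (c * r ^ (σ / p))) :
    MemWeakMorreyC n p ((n : ℝ) - α + σ) f := by
  have : NeZero n := ⟨Nat.one_le_iff_ne_zero.1 hn⟩
  exact stummel_subset_weak_morrey_classical_general (zero_lt_one.trans_le hp) hαn.le hmeas
    ENNReal.ofReal_ne_top fun r hr => ENNReal.ofReal_mul hc.le ▸ hbound r hr
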